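/- Let m, n be nonzero integers with |m| = |n|. Then the Baumslag–Solitar group BS(m,n) embeds in Thompson's group V: there exists an injective group homomorphism from BS(m,n) to the permutation group of the Cantor set C = ℕ → Bool whose image consists of prefix replacement maps. -/

import Mathlib

/-!
If `|m| = |n|`, every element of `BS(m,n)` conjugates `aᵐ` to `aᵐ` or its inverse, so the powers
of `aᵐ` form a normal subgroup, with quotient the free product `ℤ/|m| * ℤ`. It is therefore
enough to embed `ℤ/|m| * ℤ` into `V` and to find a second homomorphism `BS(m,n) → V` under which
`a` has infinite order: the two actions, placed on the two halves of the Cantor set (`par`), have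
jointly trivial kernel.

* `exists_freeProd_embedding` embeds `ℤ/k * ℤ` by ping-pong: `exists_elliptic` provides an element
  of order `k` whose non-trivial powers send the cone of `0` into the cone of `1`, and
  `exists_hyperbolic` one whose non-zero powers send the cone of `1` into the cone of `0`.
* `BS.exists_to_freeProd` identifies the kernel of `BS(m,n) → ℤ/|m| * ℤ`.
* `BS.exists_infinite_order` lets `a` act as `w` on one half and as `w⁻¹` on the other, where `w` is
  hyperbolic; `b` acts trivially if `m = n`, and by exchanging the halves if `m = -n`.

Prefix replacement maps are handled through codes (`IsCode`), families of words whose cones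
partition the Cantor set. A permutation which replaces every prefix of some fixed length is a
prefix replacement map (`ReplacesAt.isPrefixReplacement`), and this condition visibly passes to
products, which makes `V` a subgroup (`thompsonV`).
-/

/-- The Cantor set `C = ℕ → Bool`. -/
abbrev Cantor : Type := ℕ → Bool

/-- Prepend a finite word `a` to an element `ξ` of the Cantor set. -/
def prepend (a : List Bool) (ξ : Cantor) : Cantor :=
  fun n => if h : n < a.length then a.get ⟨n, h⟩ else ξ (n - a.length)

/-- A finite set of finite binary words is a complete antichain if distinct elements
are incomparable in the prefix order and every `ξ : ℕ → Bool` has an initial segment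
lying in it. -/
def IsCompleteAntichain (A : Set (List Bool)) : Prop :=
  A.Finite ∧
  (∀ a ∈ A, ∀ b ∈ A, a ≠ b → ¬ a <+: b) ∧
  (∀ ξ : Cantor, ∃ n : ℕ, (List.ofFn fun i : Fin n => ξ i) ∈ A)

/-- A permutation of the Cantor set is a prefix replacement map if it is given by
a bijection between two finite complete antichains of prefixes. -/
def IsPrefixReplacement (g : Equiv.Perm Cantor) : Prop :=
  ∃ A B : Set (List Bool), IsCompleteAntichain A ∧ IsCompleteAntichain B ∧
    ∃ σ : A ≃ B, ∀ (a : A) (ξ : Cantor), g (prepend a ξ) = prepend (σ a : List Bool) ξ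

/-- The single Baumslag–Solitar relator `b⁻¹ aᵐ b (aⁿ)⁻¹` in the free group on two
generators (`0 ↦ a`, `1 ↦ b`). -/
def bsRels (m n : ℤ) : Set (FreeGroup (Fin 2)) :=
  {(FreeGroup.of 1)⁻¹ * (FreeGroup.of 0) ^ m * FreeGroup.of 1 * ((FreeGroup.of 0) ^ n)⁻¹}

/-- The Baumslag–Solitar group `BS(m,n) = ⟨a, b ∣ b⁻¹ aᵐ b = aⁿ⟩`. -/
abbrev BS (m n : ℤ) : Type := PresentedGroup (bsRels m n)

/-- The generator `a` of `BS(m,n)`. -/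
def BS.a (m n : ℤ) : BS m n := PresentedGroup.of 0

/-- The generator `b` of `BS(m,n)`. -/
def BS.b (m n : ℤ) : BS m n := PresentedGroup.of 1

/-! ### Words and cones -/

lemma prepend_nil (ξ : Cantor) : prepend [] ξ = ξ := by
  funext n; simp [prepend]

lemma prepend_append (a b : List Bool) (ξ : Cantor) :
    prepend (a ++ b) ξ = prepend a (prepend b ξ) := by
  funext n
  simp only [prepend, List.get_eq_getElem, List.length_append]
  by_cases h1 : n < a.length
  · have h2 : n < a.length + b.length := by omega
    simp [h1, h2]
  · by_cases h2 : n < a.length + b.length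
    · have h3 : n - a.length < b.length := by omega
      simp [h1, h2, h3, List.getElem_append_right (not_lt.mp h1)]
    · have h3 : ¬ n - a.length < b.length := by omega
      simp [h1, h2, h3, Nat.sub_sub]

lemma prepend_cons (b : Bool) (a : List Bool) (ξ : Cantor) :
    prepend (b :: a) ξ = prepend [b] (prepend a ξ) :=
  prepend_append [b] a ξ

lemma prepend_singleton_inj {b c : Bool} {ξ η : Cantor}
    (h : prepend [b] ξ = prepend [c] η) : b = c ∧ ξ = η := by
  constructor
  · simpa [prepend] using congrFun h 0
  · funext n
    simpa [prepend] using congrFun h (n + 1)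

lemma prepend_singleton_surj (ξ : Cantor) : ∃ b η, ξ = prepend [b] η := by
  refine ⟨ξ 0, fun n => ξ (n + 1), ?_⟩
  funext n
  cases n <;> simp [prepend]

/-- If two cones meet, the shorter word is a prefix of the longer one. -/
lemma prepend_eq_prepend {a b : List Bool} {ξ η : Cantor}
    (h : prepend a ξ = prepend b η) (hl : a.length ≤ b.length) :
    ∃ v, b = a ++ v ∧ ξ = prepend v η := by
  induction a generalizing b with
  | nil => exact ⟨b, rfl, by rwa [prepend_nil] at h⟩
  | cons x a ih =>
    cases b with
    | nil => simp at hl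
    | cons y b =>
      rw [prepend_cons x, prepend_cons y] at h
      obtain ⟨rfl, h'⟩ := prepend_singleton_inj h
      obtain ⟨v, rfl, hv⟩ := ih h' (by simpa using hl)
      exact ⟨v, rfl, hv⟩

lemma prepend_injective (a : List Bool) : Function.Injective (prepend a) := by
  intro ξ η h
  obtain ⟨v, hv, h'⟩ := prepend_eq_prepend h le_rfl
  obtain rfl : v = [] := by simpa using hv
  rwa [prepend_nil] at h'

lemma ofFn_prepend (a : List Bool) (ξ : Cantor) :
    (List.ofFn fun i : Fin a.length => prepend a ξ i) = a := by
  apply List.ext_getElem <;> simp +contextual [prepend]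

/-! ### Prefix codes -/

/-- A family of words is a (complete prefix) code if the corresponding cones partition the
Cantor set. -/
def IsCode {ι : Type} (p : ι → List Bool) : Prop :=
  Function.Bijective fun x : ι × Cantor => prepend (p x.1) x.2

lemma isCode_unit : IsCode fun _ : Unit => ([] : List Bool) := by
  constructor
  · rintro ⟨i, ξ⟩ ⟨j, η⟩ h
    simpa [prepend_nil] using h
  · intro ξ
    exact ⟨⟨(), ξ⟩, prepend_nil ξ⟩

lemma IsCode.sum {ι κ : Type} {p : ι → List Bool} {q : κ → List Bool}
    (hp : IsCode p) (hq : IsCode q) :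
    IsCode (Sum.elim (fun i => false :: p i) (fun i => true :: q i)) := by
  constructor
  · rintro ⟨i | i, ξ⟩ ⟨j | j, η⟩ h <;>
      simp only [Sum.elim_inl, Sum.elim_inr] at h <;>
      rw [prepend_cons, prepend_cons _ (_ : List Bool) η] at h <;>
      obtain ⟨h1, h2⟩ := prepend_singleton_inj h
    · have := @hp.1 (i, ξ) (j, η) h2
      simp_all
    · cases h1
    · cases h1
    · have := @hq.1 (i, ξ) (j, η) h2
      simp_all
  · intro ξ
    obtain ⟨b, η, rfl⟩ := prepend_singleton_surj ξ
    cases b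
    · obtain ⟨⟨i, ζ⟩, rfl⟩ := hp.2 η
      exact ⟨⟨Sum.inl i, ζ⟩, prepend_cons _ _ _⟩
    · obtain ⟨⟨i, ζ⟩, rfl⟩ := hq.2 η
      exact ⟨⟨Sum.inr i, ζ⟩, prepend_cons _ _ _⟩

lemma IsCode.comp_equiv {ι κ : Type} {p : ι → List Bool} (hp : IsCode p) (e : κ ≃ ι) :
    IsCode (p ∘ e) :=
  hp.comp (e.prodCongr (Equiv.refl Cantor)).bijective

lemma IsCode.option {ι : Type} {p : ι → List Bool} (hp : IsCode p) :
    IsCode (fun x : Option ι => x.elim [false] fun i => true :: p i) := by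
  have h := (isCode_unit.sum hp).comp_equiv ((Equiv.optionEquivSumPUnit ι).trans
    (Equiv.sumComm _ _))
  convert h using 1
  funext x
  cases x <;> rfl

lemma exists_isCode (ι : Type) [Finite ι] : Nonempty ι → ∃ p : ι → List Bool, IsCode p := by
  induction ι using Finite.induction_empty_option with
  | of_equiv e h =>
    intro _
    obtain ⟨p, hp⟩ := h (e.nonempty)
    exact ⟨_, hp.comp_equiv e.symm⟩
  | h_empty => rintro ⟨⟨⟩⟩
  | @h_option α _ ih =>
    intro _
    cases isEmpty_or_nonempty α
    · exact ⟨_, isCode_unit.comp_equiv (Equiv.ofUnique (Option α) Unit)⟩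
    · obtain ⟨p, hp⟩ := ih ‹_›
      exact ⟨_, hp.option⟩

/-- Any finite set with at least two elements indexes a code in which a prescribed index gets
the word `0`; all other words then start with `1`. -/
lemma exists_isCode_pointed (ι : Type) [Finite ι] [Nontrivial ι] (i₀ : ι) :
    ∃ p : ι → List Bool, IsCode p ∧ p i₀ = [false] ∧ ∀ i ≠ i₀, ∃ v, p i = true :: v := by
  classical
  have : Nonempty {i // i ≠ i₀} := by
    obtain ⟨i, hi⟩ := exists_ne i₀
    exact ⟨⟨i, hi⟩⟩
  obtain ⟨p, hp⟩ := exists_isCode {i // i ≠ i₀} this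
  refine ⟨_, hp.option.comp_equiv (Equiv.optionSubtypeNe i₀).symm, ?_, ?_⟩
  · simp
  · intro i hi
    simp [Equiv.optionSubtypeNe_symm_of_ne hi]

/-- The words of a finite code form a complete antichain. -/
lemma IsCode.isCompleteAntichain {ι : Type} [Finite ι] {p : ι → List Bool} (hp : IsCode p) :
    IsCompleteAntichain (Set.range p) := by
  refine ⟨Set.finite_range p, ?_, ?_⟩
  · rintro _ ⟨i, rfl⟩ _ ⟨j, rfl⟩ hne ⟨v, hv⟩
    have h := @hp.1 (i, prepend v fun _ => false) (j, fun _ => false)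
      (by simp only [← prepend_append, hv])
    exact hne (congrArg p (Prod.ext_iff.mp h).1)
  · intro ξ
    obtain ⟨⟨i, η⟩, rfl⟩ := hp.2 ξ
    exact ⟨(p i).length, i, (ofFn_prepend (p i) η).symm⟩

lemma IsCode.injective {ι : Type} {p : ι → List Bool} (hp : IsCode p) :
    Function.Injective p := by
  intro i j h
  have h := @hp.1 (i, fun _ => false) (j, fun _ => false) (by simp only [h])
  exact (Prod.ext_iff.mp h).1

/-- The words of a fixed length form a code. -/
lemma isCode_length (N : ℕ) :
    IsCode fun u : List.Vector Bool N => u.toList := by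
  constructor
  · rintro ⟨u, ξ⟩ ⟨v, η⟩ h
    obtain ⟨t, ht, h'⟩ := prepend_eq_prepend h (by simp)
    have ht' := congrArg List.length ht
    obtain rfl : t = [] := by simpa using ht'
    rw [prepend_nil] at h'
    have : u = v := List.Vector.toList_injective (by simpa using ht.symm)
    exact Prod.ext this h'
  · intro ξ
    induction N generalizing ξ with
    | zero => exact ⟨⟨List.Vector.nil, ξ⟩, prepend_nil ξ⟩
    | succ N ih =>
      obtain ⟨b, η, rfl⟩ := prepend_singleton_surj ξ
      obtain ⟨⟨u, ζ⟩, rfl⟩ := ih η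
      refine ⟨⟨b ::ᵥ u, ζ⟩, ?_⟩
      simp only [List.Vector.toList_cons]
      exact prepend_cons _ _ _

/-! ### Thompson's group as a subgroup -/

/-- `g` replaces every prefix of length `N` by some other word. -/
def ReplacesAt (N : ℕ) (g : Equiv.Perm Cantor) : Prop :=
  ∀ u : List Bool, u.length = N → ∃ w, ∀ η, g (prepend u η) = prepend w η

lemma ReplacesAt.mono {N M : ℕ} (h : N ≤ M) {g : Equiv.Perm Cantor} (hg : ReplacesAt N g) :
    ReplacesAt M g := by
  intro u hu
  obtain ⟨w, hw⟩ := hg (u.take N) (by simp; omega)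
  refine ⟨w ++ u.drop N, fun η => ?_⟩
  rw [prepend_append, ← hw, ← prepend_append, List.take_append_drop]

lemma ReplacesAt.mul {N M : ℕ} {g h : Equiv.Perm Cantor} (hg : ReplacesAt N g)
    (hh : ReplacesAt M h) : ReplacesAt (M + N) (g * h) := by
  intro u hu
  obtain ⟨w, hw⟩ := hh (u.take M) (by simp; omega)
  have hlen : N ≤ (w ++ u.drop M).length := by simp; omega
  obtain ⟨w', hw'⟩ := hg.mono hlen _ rfl
  refine ⟨w', fun η => ?_⟩
  rw [← hw', prepend_append, ← hw, ← prepend_append, List.take_append_drop]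
  rfl

lemma IsCode.replacesAt {ι : Type} [Finite ι] {p q : ι → List Bool} (hp : IsCode p)
    {g : Equiv.Perm Cantor} (h : ∀ i η, g (prepend (p i) η) = prepend (q i) η) :
    ∃ N, ReplacesAt N g := by
  obtain ⟨N, hN⟩ := (Set.finite_range fun i => (p i).length).bddAbove
  refine ⟨N, fun u hu => ?_⟩
  obtain ⟨⟨i, ζ⟩, hi⟩ := hp.2 (prepend u fun _ => false)
  obtain ⟨v, rfl, -⟩ := prepend_eq_prepend hi (hu ▸ hN ⟨i, rfl⟩)
  exact ⟨q i ++ v, fun η => by rw [prepend_append, h, prepend_append]⟩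

/-- If `g` replaces prefixes of length `N`, the replacing words again form a code, because `g`
is a bijection. -/
lemma ReplacesAt.isPrefixReplacement {N : ℕ} {g : Equiv.Perm Cantor} (hg : ReplacesAt N g) :
    IsPrefixReplacement g := by
  choose w hw using fun u : List.Vector Bool N => hg u.toList u.toList_length
  have hp := isCode_length N
  have hq : IsCode w := by
    have h : (fun x : List.Vector Bool N × Cantor => prepend (w x.1) x.2) =
        g ∘ fun x => prepend x.1.toList x.2 := funext fun x => (hw x.1 x.2).symm
    rw [IsCode, h]
    exact g.bijective.comp hp
  refine ⟨_, _, hp.isCompleteAntichain, hq.isCompleteAntichain,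
    (Equiv.ofInjective _ hp.injective).symm.trans (Equiv.ofInjective _ hq.injective), ?_⟩
  rintro ⟨_, u, rfl⟩ ξ
  have : (Equiv.ofInjective _ hp.injective).symm ⟨u.toList, u, rfl⟩ = u :=
    Equiv.ofInjective_symm_apply hp.injective u
  simp only [Equiv.trans_apply, this, Equiv.ofInjective_apply]
  exact hw u ξ

/-- Thompson's group `V`. Asking that both `g` and `g⁻¹` replace prefixes of some fixed length
makes closure under inverses immediate. -/
def thompsonV : Subgroup (Equiv.Perm Cantor) where
  carrier := {g | (∃ N, ReplacesAt N g) ∧ ∃ N, ReplacesAt N g⁻¹}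
  mul_mem' := by
    rintro g h ⟨⟨N, hN⟩, ⟨M, hM⟩⟩ ⟨⟨N', hN'⟩, ⟨M', hM'⟩⟩
    refine ⟨⟨_, hN.mul hN'⟩, ⟨M + M', ?_⟩⟩
    rw [mul_inv_rev]
    exact hM'.mul hM
  one_mem' := by
    have : ReplacesAt 0 1 := fun u _ => ⟨u, fun _ => rfl⟩
    exact ⟨⟨0, this⟩, ⟨0, by simpa using this⟩⟩
  inv_mem' := by
    rintro g ⟨h1, h2⟩
    exact ⟨h2, by simpa using h1⟩

lemma isPrefixReplacement_of_mem {g : Equiv.Perm Cantor} (hg : g ∈ thompsonV) :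
    IsPrefixReplacement g :=
  hg.1.choose_spec.isPrefixReplacement

lemma mem_thompsonV_of_isCode {ι : Type} [Finite ι] {p q : ι → List Bool} (hp : IsCode p)
    (hq : IsCode q) {g : Equiv.Perm Cantor}
    (h : ∀ i η, g (prepend (p i) η) = prepend (q i) η) : g ∈ thompsonV :=
  ⟨hp.replacesAt h, hq.replacesAt (q := p) fun i η => by
    rw [Equiv.Perm.inv_eq_iff_eq, h]⟩

/-- The homeomorphism matching up two codes with the same index set. -/
noncomputable def codePerm {ι : Type} {p q : ι → List Bool} (hp : IsCode p) (hq : IsCode q) :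
    Equiv.Perm Cantor :=
  (Equiv.ofBijective _ hp).symm.trans (Equiv.ofBijective _ hq)

lemma codePerm_apply {ι : Type} {p q : ι → List Bool} (hp : IsCode p) (hq : IsCode q)
    (i : ι) (η : Cantor) : codePerm hp hq (prepend (p i) η) = prepend (q i) η := by
  have : (Equiv.ofBijective _ hp).symm (prepend (p i) η) = (i, η) :=
    Equiv.ofBijective_symm_apply_apply _ hp (i, η)
  rw [codePerm, Equiv.trans_apply, this]
  rfl

/-! ### Acting separately on the two halves of the Cantor set -/

/-- The decomposition of the Cantor set into the cones of `0` and `1`. -/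
noncomputable def halves : Cantor ⊕ Cantor ≃ Cantor :=
  Equiv.ofBijective (Sum.elim (prepend [false]) (prepend [true])) <| by
    constructor
    · rintro (ξ | ξ) (η | η) h <;> have h := prepend_singleton_inj h <;> simp_all
    · intro ξ
      obtain ⟨b, η, rfl⟩ := prepend_singleton_surj ξ
      cases b
      · exact ⟨Sum.inl η, rfl⟩
      · exact ⟨Sum.inr η, rfl⟩

lemma halves_inl (ξ : Cantor) : halves (Sum.inl ξ) = prepend [false] ξ := rfl

lemma halves_inr (ξ : Cantor) : halves (Sum.inr ξ) = prepend [true] ξ := rfl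

/-- The pair `(g, h)` acts by `g` on the cone of `0` and by `h` on the cone of `1`. -/
noncomputable def par : Equiv.Perm Cantor × Equiv.Perm Cantor →* Equiv.Perm Cantor :=
  halves.permCongrHom.toMonoidHom.comp (Equiv.Perm.sumCongrHom Cantor Cantor)

lemma par_injective : Function.Injective par :=
  halves.permCongrHom.injective.comp Equiv.Perm.sumCongrHom_injective

lemma par_false (x : Equiv.Perm Cantor × Equiv.Perm Cantor) (ξ : Cantor) :
    par x (prepend [false] ξ) = prepend [false] (x.1 ξ) := by
  rw [← halves_inl, ← halves_inl]
  simp [par]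

lemma par_true (x : Equiv.Perm Cantor × Equiv.Perm Cantor) (ξ : Cantor) :
    par x (prepend [true] ξ) = prepend [true] (x.2 ξ) := by
  rw [← halves_inr, ← halves_inr]
  simp [par]

lemma replacesAt_par {x : Equiv.Perm Cantor × Equiv.Perm Cantor} (h1 : ∃ N, ReplacesAt N x.1)
    (h2 : ∃ N, ReplacesAt N x.2) : ∃ N, ReplacesAt N (par x) := by
  obtain ⟨N, hN⟩ := h1
  obtain ⟨M, hM⟩ := h2
  refine ⟨N + M + 1, fun u hu => ?_⟩
  obtain _ | ⟨b, u⟩ := u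
  · simp at hu
  have hlen : u.length = N + M := by simpa using hu
  cases b
  · obtain ⟨w, hw⟩ := hN.mono (Nat.le_add_right N M) u hlen
    exact ⟨false :: w, fun η => by rw [prepend_cons, par_false, hw, ← prepend_cons]⟩
  · obtain ⟨w, hw⟩ := hM.mono (Nat.le_add_left M N) u hlen
    exact ⟨true :: w, fun η => by rw [prepend_cons, par_true, hw, ← prepend_cons]⟩

lemma par_mem {g h : Equiv.Perm Cantor} (hg : g ∈ thompsonV) (hh : h ∈ thompsonV) :
    par (g, h) ∈ thompsonV :=
  ⟨replacesAt_par hg.1 hh.1, by rw [← map_inv]; exact replacesAt_par hg.2 hh.2⟩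

/-- The flip of the first letter is an element of `V` which exchanges the two factors
of `par`. -/
lemma exists_flip : ∃ s ∈ thompsonV, ∀ g h, s⁻¹ * par (g, h) * s = par (h, g) := by
  have hp := isCode_unit.sum isCode_unit
  have hq := hp.comp_equiv (Equiv.sumComm Unit Unit)
  refine ⟨codePerm hp hq, mem_thompsonV_of_isCode hp hq (codePerm_apply hp hq), ?_⟩
  have h0 : ∀ ξ, codePerm hp hq (prepend [false] ξ) = prepend [true] ξ :=
    codePerm_apply hp hq (Sum.inl ())
  have h1 : ∀ ξ, codePerm hp hq (prepend [true] ξ) = prepend [false] ξ :=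
    codePerm_apply hp hq (Sum.inr ())
  intro g h
  rw [mul_assoc, inv_mul_eq_iff_eq_mul]
  ext1 ξ
  obtain ⟨b, η, rfl⟩ := prepend_singleton_surj ξ
  cases b
  · simp only [Equiv.Perm.mul_apply, h0, par_true, par_false]
  · simp only [Equiv.Perm.mul_apply, h1, par_true, par_false]

/-! ### The ping-pong players -/

/-- The elliptic player: an element of order `k` in `V` whose non-trivial powers all map the
cone of `0` into the cone of `1`. It permutes `k` cones cyclically, one of them the cone of
`0`; one further cone is fixed, so that the construction also works for `k = 1`. -/
lemma exists_elliptic (k : ℕ) [NeZero k] : ∃ z ∈ thompsonV, z ^ k = 1 ∧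
    ∀ j : ℤ, ¬ (k : ℤ) ∣ j → ∀ ξ, ∃ η, (z ^ j) (prepend [false] ξ) = prepend [true] η := by
  obtain ⟨p, hp, hp0, hp1⟩ := exists_isCode_pointed (Option (ZMod k)) (some 0)
  have hq := hp.comp_equiv (Equiv.optionCongr (Equiv.addRight (1 : ZMod k)))
  have hz := codePerm_apply hp hq
  set z := codePerm hp hq with hzdef
  have hnone : ∀ (j : ℤ) η, (z ^ j) (prepend (p none) η) = prepend (p none) η := by
    intro j η
    exact Function.IsFixedPt.perm_zpow (hz none η) j
  have hstep : ∀ (x : ZMod k) η, z (prepend (p (some x)) η) = prepend (p (some (x + 1))) η :=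
    fun x η => hz (some x) η
  have hsome : ∀ (j : ℤ) (x : ZMod k) η,
      (z ^ j) (prepend (p (some x)) η) = prepend (p (some (x + j))) η := by
    intro j
    induction j using Int.induction_on with
    | zero => simp
    | succ i ih =>
      intro x η
      rw [zpow_add_one, Equiv.Perm.mul_apply, hstep, ih]
      push_cast
      rw [add_right_comm, add_assoc]
    | pred i ih =>
      intro x η
      have : z⁻¹ (prepend (p (some x)) η) = prepend (p (some (x - 1))) η := by
        rw [Equiv.Perm.inv_eq_iff_eq, hstep, sub_add_cancel]
      rw [zpow_sub_one, Equiv.Perm.mul_apply, this, ih]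
      push_cast
      congr 3
      ring
  refine ⟨z, mem_thompsonV_of_isCode hp hq hz, ?_, ?_⟩
  · ext1 ξ
    obtain ⟨⟨i, η⟩, rfl⟩ := hp.2 ξ
    rw [← zpow_natCast]
    cases i with
    | none => simp only [hnone, Equiv.Perm.one_apply]
    | some x =>
      simp only [hsome, Int.cast_natCast, CharP.cast_eq_zero, add_zero, Equiv.Perm.one_apply]
  · intro j hj ξ
    have hj' : (some (0 + (j : ZMod k))) ≠ some 0 := by
      simpa [ZMod.intCast_zmod_eq_zero_iff_dvd] using hj
    obtain ⟨v, hv⟩ := hp1 _ hj'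
    exact ⟨prepend v ξ, by rw [← hp0, hsome, hv, prepend_cons]⟩

/-- The hyperbolic player: an element of `V` whose non-trivial powers all map the cone of `1`
into the cone of `0`. It is given by `1 ↦ 010`, `01 ↦ 011`, `001 ↦ 1`, `000 ↦ 00`: positive
powers push the cone of `1` into the cone of `01`, negative ones into that of `00`. -/
lemma exists_hyperbolic : ∃ w ∈ thompsonV,
    ∀ j : ℤ, j ≠ 0 → ∀ ξ, ∃ η, (w ^ j) (prepend [true] ξ) = prepend [false] η := by
  let u := isCode_unit
  have hp := ((u.sum u).sum u).sum u
  have hq₀ := (u.sum (u.sum u)).sum u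
  -- Reindexing of the four words, from `000, 001, 01, 1` to `00, 1, 011, 010`.
  let e : (((Unit ⊕ Unit) ⊕ Unit) ⊕ Unit) ≃ ((Unit ⊕ (Unit ⊕ Unit)) ⊕ Unit) :=
    { toFun := fun x => match x with
        | .inl (.inl (.inl _)) => .inl (.inl ())
        | .inl (.inl (.inr _)) => .inr ()
        | .inl (.inr _) => .inl (.inr (.inr ()))
        | .inr _ => .inl (.inr (.inl ()))
      invFun := fun x => match x with
        | .inl (.inl _) => .inl (.inl (.inl ()))
        | .inr _ => .inl (.inl (.inr ()))
        | .inl (.inr (.inr _)) => .inl (.inr ())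
        | .inl (.inr (.inl _)) => .inr ()
      left_inv := by rintro (((_ | _) | _) | _) <;> rfl
      right_inv := by rintro ((_ | (_ | _)) | _) <;> rfl }
  have hq := hq₀.comp_equiv e
  have hw := codePerm_apply hp hq
  set w := codePerm hp hq
  have w1 : ∀ η, w (prepend [true] η) = prepend [false, true, false] η := hw (.inr ())
  have w01 : ∀ η, w (prepend [false, true] η) = prepend [false, true, true] η :=
    hw (.inl (.inr ()))
  have w001 : ∀ η, w (prepend [false, false, true] η) = prepend [true] η :=
    hw (.inl (.inl (.inr ())))
  have w000 : ∀ η, w (prepend [false, false, false] η) = prepend [false, false] η :=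
    hw (.inl (.inl (.inl ())))
  have hpos : ∀ (n : ℕ) ξ, ∃ η, (w ^ (n + 1)) (prepend [true] ξ) = prepend [false, true] η := by
    intro n ξ
    induction n with
    | zero => exact ⟨prepend [false] ξ, by rw [← prepend_append]; simpa using w1 ξ⟩
    | succ n ih =>
      obtain ⟨η, hη⟩ := ih
      refine ⟨prepend [true] η, ?_⟩
      rw [pow_succ', Equiv.Perm.mul_apply, hη, w01, ← prepend_append]
      rfl
  have hneg : ∀ (n : ℕ) ξ,
      ∃ η, (w⁻¹ ^ (n + 1)) (prepend [true] ξ) = prepend [false, false] η := by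
    intro n ξ
    induction n with
    | zero =>
      refine ⟨prepend [true] ξ, ?_⟩
      rw [zero_add, pow_one, Equiv.Perm.inv_eq_iff_eq, ← prepend_append]
      exact (w001 ξ).symm
    | succ n ih =>
      obtain ⟨η, hη⟩ := ih
      refine ⟨prepend [false] η, ?_⟩
      rw [pow_succ', Equiv.Perm.mul_apply, hη, Equiv.Perm.inv_eq_iff_eq, ← prepend_append]
      exact (w000 η).symm
  refine ⟨w, mem_thompsonV_of_isCode hp hq hw, fun j hj ξ => ?_⟩
  obtain ⟨n, rfl | rfl⟩ := j.eq_nat_or_neg <;> obtain _ | n := n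
  · simp at hj
  · obtain ⟨η, hη⟩ := hpos n ξ
    exact ⟨prepend [true] η, by rw [zpow_natCast, hη, prepend_cons]⟩
  · simp at hj
  · obtain ⟨η, hη⟩ := hneg n ξ
    exact ⟨prepend [false] η, by rw [zpow_neg, ← inv_zpow, zpow_natCast, hη, prepend_cons]⟩

/-! ### The free product `ℤ/k * ℤ` -/

/-- The orders of the two free factors; the order `0` stands for `ZMod 0 = ℤ`. -/
def factorOrder (k : ℕ) (i : Bool) : ℕ := cond i 0 k

/-- The free product `ℤ/k * ℤ`. -/
abbrev FreeProd (k : ℕ) : Type :=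
  Monoid.CoprodI fun i : Bool => Multiplicative (ZMod (factorOrder k i))

/-- The homomorphism from a cyclic group `ℤ/c` sending the generator to `g`. -/
def cyclicLift {K : Type} [Group K] (c : ℕ) (g : K) (hg : g ^ c = 1) :
    Multiplicative (ZMod c) →* K :=
  AddMonoidHom.toMultiplicativeLeft
    (ZMod.lift c ⟨zmultiplesHom (Additive K) (Additive.ofMul g), by
      rw [zmultiplesHom_apply, natCast_zsmul, ← ofMul_pow, hg, ofMul_one]⟩)

lemma cyclicLift_apply {K : Type} [Group K] (c : ℕ) (g : K) (hg : g ^ c = 1) (j : ℤ) :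
    cyclicLift c g hg (Multiplicative.ofAdd (j : ZMod c)) = g ^ j := by
  simp only [cyclicLift, AddMonoidHom.toMultiplicativeLeft_apply_apply, toAdd_ofAdd, ZMod.lift_coe]
  rfl

/-- The canonical generator of the factor of index `i`. -/
def FreeProd.gen (k : ℕ) (i : Bool) : FreeProd k :=
  Monoid.CoprodI.of (i := i) (Multiplicative.ofAdd (1 : ZMod (factorOrder k i)))

lemma FreeProd.gen_false_pow (k : ℕ) : FreeProd.gen k false ^ k = 1 := by
  rw [FreeProd.gen, ← map_pow, ← ofAdd_nsmul]
  have : k • (1 : ZMod (factorOrder k false)) = 0 := by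
    change k • (1 : ZMod k) = 0
    simp
  rw [this, ofAdd_zero, map_one]

lemma FreeProd.lift_gen {K : Type} [Group K] (k : ℕ) (g : Bool → K)
    (hg : ∀ i, g i ^ factorOrder k i = 1) (i : Bool) :
    Monoid.CoprodI.lift (fun i => cyclicLift (factorOrder k i) (g i) (hg i))
      (FreeProd.gen k i) = g i := by
  rw [FreeProd.gen, Monoid.CoprodI.lift_of]
  simpa using cyclicLift_apply (factorOrder k i) (g i) (hg i) 1

/-- Ping-pong between the two players shows that they generate a copy of `ℤ/k * ℤ`. -/
lemma exists_freeProd_embedding (k : ℕ) [NeZero k] :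
    ∃ f : FreeProd k →* Equiv.Perm Cantor, Function.Injective f ∧
      ∀ i, f (FreeProd.gen k i) ∈ thompsonV := by
  obtain ⟨z, hzV, hzk, hz⟩ := exists_elliptic k
  obtain ⟨w, hwV, hw⟩ := exists_hyperbolic
  let g : Bool → Equiv.Perm Cantor := fun i => cond i w z
  have hg : ∀ i, g i ^ factorOrder k i = 1 := by
    rintro (_ | _)
    · exact hzk
    · exact pow_zero w
  refine ⟨Monoid.CoprodI.lift fun i => cyclicLift (factorOrder k i) (g i) (hg i), ?_, ?_⟩
  · refine Monoid.CoprodI.lift_injective_of_ping_pong _ ?_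
      (fun i => Set.range (prepend [!i])) ?_ ?_ ?_
    · refine Or.inr ⟨true, ?_⟩
      have : Infinite (Multiplicative (ZMod (factorOrder k true))) :=
        inferInstanceAs (Infinite (Multiplicative ℤ))
      exact (Cardinal.natCast_le_aleph0 (n := 3)).trans (Cardinal.aleph0_le_mk _)
    · exact fun i => Set.range_nonempty _
    · intro i j hij
      refine Set.disjoint_left.mpr ?_
      rintro _ ⟨ξ, rfl⟩ ⟨η, h⟩
      exact hij (by simpa using (prepend_singleton_inj h).1.symm)
    · intro i j hij h hne
      obtain ⟨x, rfl⟩ := Multiplicative.ofAdd.surjective h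
      obtain ⟨l, rfl⟩ := ZMod.intCast_surjective x
      have hl : ¬ (factorOrder k i : ℤ) ∣ l := by
        rw [← ZMod.intCast_zmod_eq_zero_iff_dvd]
        intro h0
        exact hne (by rw [h0, ofAdd_zero])
      rw [cyclicLift_apply]
      rintro _ ⟨_, ⟨ξ, rfl⟩, rfl⟩
      cases i <;> cases j
      · exact absurd rfl hij
      · obtain ⟨η, hη⟩ := hz l hl ξ
        exact ⟨η, hη.symm⟩
      · obtain ⟨η, hη⟩ := hw l (by rintro rfl; exact hl (dvd_zero _)) ξ
        exact ⟨η, hη.symm⟩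
      · exact absurd rfl hij
  · intro i
    rw [FreeProd.lift_gen]
    cases i
    · exact hzV
    · exact hwV

/-! ### The Baumslag–Solitar group -/

lemma BS.rel (m n : ℤ) : (BS.b m n)⁻¹ * BS.a m n ^ m * BS.b m n = BS.a m n ^ n := by
  have h : PresentedGroup.mk (bsRels m n) _ = 1 :=
    PresentedGroup.one_of_mem (rels := bsRels m n) rfl
  simp only [map_mul, map_inv, map_zpow] at h
  exact mul_inv_eq_one.mp h

lemma BS.closure_eq_top (m n : ℤ) :
    Subgroup.closure {BS.a m n, BS.b m n} = ⊤ := by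
  rw [← PresentedGroup.closure_range_of (bsRels m n)]
  congr 1
  ext x
  simp [Fin.exists_fin_two, BS.a, BS.b, eq_comm]

/-- Universal property of `BS(m,n)`. -/
lemma BS.exists_lift {m n : ℤ} {K : Type} [Group K] (x y : K)
    (h : y⁻¹ * x ^ m * y = x ^ n) :
    ∃ f : BS m n →* K, f (BS.a m n) = x ∧ f (BS.b m n) = y := by
  have hr : ∀ r ∈ bsRels m n, FreeGroup.lift ![x, y] r = 1 := by
    rintro r rfl
    simp [h]
  exact ⟨PresentedGroup.toGroup hr, PresentedGroup.toGroup.of hr, PresentedGroup.toGroup.of hr⟩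

/-- Conjugation by any element of `BS(m,n)` fixes or inverts `aᵐ`, if `|m| = |n|`. -/
lemma BS.conj_pow {m n : ℤ} (hmn : |m| = |n|) (g : BS m n) :
    g * BS.a m n ^ m * g⁻¹ = BS.a m n ^ m ∨ g * BS.a m n ^ m * g⁻¹ = (BS.a m n ^ m)⁻¹ := by
  have hg : g ∈ Subgroup.closure {BS.a m n, BS.b m n} := by
    rw [BS.closure_eq_top]; trivial
  have hinv : ∀ {x t : BS m n}, x * t * x⁻¹ = t⁻¹ → x * t⁻¹ * x⁻¹ = t := by
    intro x t h
    rw [← conj_inv, h, inv_inv]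
  induction hg using Subgroup.closure_induction with
  | mem x hx =>
    obtain rfl | rfl := hx
    · left
      rw [mul_inv_eq_iff_eq_mul]
      exact (Commute.refl (BS.a m n)).zpow_right m
    · have hr := BS.rel m n
      rw [mul_assoc, inv_mul_eq_iff_eq_mul] at hr
      obtain rfl | h := abs_eq_abs.mp hmn
      · left
        rw [mul_inv_eq_iff_eq_mul, hr]
      · right
        obtain rfl : n = -m := by omega
        rw [zpow_neg] at hr
        rw [← hinv (t := (BS.a m (-m) ^ m)⁻¹) (x := BS.b m (-m)) (by
          rw [inv_inv, ← hr]; group)]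
        simp
  | one => left; simp
  | mul x y _ _ hx hy =>
    have e : ∀ t, x * y * t * (x * y)⁻¹ = x * (y * t * y⁻¹) * x⁻¹ := fun t => by group
    rw [e]
    obtain hy | hy := hy <;> obtain hx | hx := hx <;> rw [hy]
    · exact Or.inl hx
    · exact Or.inr hx
    · exact Or.inr (by rw [← conj_inv, hx])
    · exact Or.inl (hinv hx)
  | inv x _ hx =>
    obtain hx | hx := hx
    · left
      nth_rewrite 1 [← hx]
      group
    · right
      nth_rewrite 1 [← hinv hx]
      group

lemma BS.normal_zpowers {m n : ℤ} (hmn : |m| = |n|) :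
    (Subgroup.zpowers (BS.a m n ^ m)).Normal := by
  constructor
  rintro _ ⟨j, rfl⟩ g
  have e : g * (BS.a m n ^ m) ^ j * g⁻¹ = (g * BS.a m n ^ m * g⁻¹) ^ j := conj_zpow.symm
  change g * (BS.a m n ^ m) ^ j * g⁻¹ ∈ _
  rw [e]
  apply Subgroup.zpow_mem
  obtain h | h := BS.conj_pow hmn g <;> rw [h]
  · exact Subgroup.mem_zpowers _
  · exact Subgroup.inv_mem _ (Subgroup.mem_zpowers _)

/-- Killing `aᵐ` turns `BS(m,n)` into `ℤ/|m| * ℤ`, and nothing but powers of `aᵐ` dies. -/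
lemma BS.exists_to_freeProd {m n : ℤ} (hmn : |m| = |n|) :
    ∃ f : BS m n →* FreeProd m.natAbs, f (BS.a m n) = FreeProd.gen _ false ∧
      f (BS.b m n) = FreeProd.gen _ true ∧
      ∀ x, f x = 1 → x ∈ Subgroup.zpowers (BS.a m n ^ m) := by
  have := BS.normal_zpowers hmn
  have hkill : ∀ {K : Type} [Group K] (x : K) (l : ℤ), x ^ m.natAbs = 1 → |m| = |l| →
      x ^ l = 1 := by
    intro K _ x l hx hl
    obtain ⟨c, hc⟩ : (m.natAbs : ℤ) ∣ l := by
      rw [Int.natCast_natAbs, hl, abs_dvd]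
    rw [hc, zpow_mul, zpow_natCast, hx, one_zpow]
  have hgen := FreeProd.gen_false_pow m.natAbs
  obtain ⟨f, hfa, hfb⟩ := BS.exists_lift (m := m) (n := n) (FreeProd.gen m.natAbs false)
    (FreeProd.gen m.natAbs true) (by rw [hkill _ m hgen rfl, hkill _ n hgen hmn]; simp)
  refine ⟨f, hfa, hfb, fun x hx => ?_⟩
  -- The quotient by the powers of `aᵐ` factors through the free product.
  let mk := QuotientGroup.mk' (Subgroup.zpowers (BS.a m n ^ m))
  let g : Bool → BS m n ⧸ Subgroup.zpowers (BS.a m n ^ m) :=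
    fun i => cond i (mk (BS.b m n)) (mk (BS.a m n))
  have hg : ∀ i, g i ^ factorOrder m.natAbs i = 1 := by
    rintro (_ | _)
    · have h : mk (BS.a m n ^ m) = 1 :=
        (QuotientGroup.eq_one_iff _).mpr (Subgroup.mem_zpowers _)
      change mk (BS.a m n) ^ m.natAbs = 1
      rw [← zpow_natCast, Int.natCast_natAbs]
      rw [map_zpow] at h
      obtain h' | h' := abs_choice m <;> rw [h']
      · exact h
      · rw [zpow_neg, h, inv_one]
    · exact pow_zero _
  have hcomp : (Monoid.CoprodI.lift fun i => cyclicLift (factorOrder m.natAbs i) (g i)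
      (hg i)).comp f = mk := by
    refine MonoidHom.eq_of_eqOn_dense (BS.closure_eq_top m n) ?_
    rintro y (rfl | rfl)
    · rw [MonoidHom.comp_apply, hfa, FreeProd.lift_gen]; rfl
    · rw [MonoidHom.comp_apply, hfb, FreeProd.lift_gen]; rfl
  have : mk x = 1 := by rw [← hcomp, MonoidHom.comp_apply, hx, map_one]
  exact (QuotientGroup.eq_one_iff _).mp this

/-- A homomorphism to `V` under which `a` has infinite order: `a` acts as a hyperbolic element
on one half of the Cantor set and as its inverse on the other half, while `b` acts trivially if
`m = n` and exchanges the halves if `m = -n`. -/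
lemma BS.exists_infinite_order {m n : ℤ} (hmn : |m| = |n|) :
    ∃ f : BS m n →* Equiv.Perm Cantor, f (BS.a m n) ∈ thompsonV ∧ f (BS.b m n) ∈ thompsonV ∧
      ∀ j : ℤ, f (BS.a m n) ^ j = 1 → j = 0 := by
  obtain ⟨w, hwV, hw⟩ := exists_hyperbolic
  obtain ⟨s, hsV, hs⟩ := exists_flip
  have hx : par (w, w⁻¹) ∈ thompsonV := par_mem hwV (thompsonV.inv_mem hwV)
  have hord : ∀ j : ℤ, par (w, w⁻¹) ^ j = 1 → j = 0 := by
    intro j hj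
    rw [← map_zpow, ← map_one par] at hj
    have hj : w ^ j = 1 := congrArg Prod.fst (par_injective hj)
    by_contra h0
    obtain ⟨η, hη⟩ := hw j h0 fun _ => false
    rw [hj, Equiv.Perm.one_apply] at hη
    exact absurd (prepend_singleton_inj hη).1 (by decide)
  obtain ⟨y, hyV, hy⟩ : ∃ y ∈ thompsonV,
      y⁻¹ * par (w, w⁻¹) ^ m * y = par (w, w⁻¹) ^ n := by
    obtain rfl | rfl := abs_eq_abs.mp hmn
    · exact ⟨1, thompsonV.one_mem, by simp⟩
    · refine ⟨s, hsV, ?_⟩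
      rw [← map_zpow, Prod.pow_mk, hs, ← map_zpow, Prod.pow_mk]
      simp
  obtain ⟨f, hfa, hfb⟩ := BS.exists_lift _ _ hy
  exact ⟨f, hfa ▸ hx, hfb ▸ hyV, fun j hj => hord j (by rwa [hfa] at hj)⟩

/-- If `|m| = |n|` (with `m, n` nonzero), then `BS(m,n)` embeds in Thompson's group
`V`: there is an injective homomorphism from `BS(m,n)` to the permutation group of
the Cantor set whose image consists of prefix replacement maps. -/
theorem BS_embeds_in_V (m n : ℤ) (hm : m ≠ 0) (hn : n ≠ 0) (hmn : |m| = |n|) :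
    ∃ φ : BS m n →* Equiv.Perm Cantor,
      Function.Injective φ ∧ ∀ x : BS m n, IsPrefixReplacement (φ x) := by
  have : NeZero m.natAbs := ⟨Int.natAbs_ne_zero.mpr hm⟩
  obtain ⟨π, hπa, hπb, hπ⟩ := BS.exists_to_freeProd hmn
  obtain ⟨ι, hι, hιV⟩ := exists_freeProd_embedding m.natAbs
  obtain ⟨ψ, hψa, hψb, hψ⟩ := BS.exists_infinite_order hmn
  refine ⟨par.comp ((ι.comp π).prod ψ), ?_, fun x => isPrefixReplacement_of_mem ?_⟩
  · rw [injective_iff_map_eq_one]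
    intro x hx
    rw [MonoidHom.comp_apply, ← map_one par] at hx
    have hx := par_injective hx
    have h1 : ι (π x) = 1 := congrArg Prod.fst hx
    have h2 : ψ x = 1 := congrArg Prod.snd hx
    -- The first half forces `x` to be a power of `aᵐ`; the second half then forces `x = 1`.
    obtain ⟨j, rfl⟩ := hπ x (hι (by rw [h1, map_one]))
    simp only [← zpow_mul, map_zpow] at h2 ⊢
    rw [hψ _ h2, zpow_zero]
  · have hx : x ∈ Subgroup.closure {BS.a m n, BS.b m n} := by
      rw [BS.closure_eq_top]; trivial
    have hle : Subgroup.closure {BS.a m n, BS.b m n} ≤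
        thompsonV.comap (par.comp ((ι.comp π).prod ψ)) := by
      rw [Subgroup.closure_le]
      rintro y (rfl | rfl)
      · exact par_mem (by rw [MonoidHom.comp_apply, hπa]; exact hιV _) hψa
      · exact par_mem (by rw [MonoidHom.comp_apply, hπb]; exact hιV _) hψb
    exact hle hx
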